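/- Let n ≥ 2, λ > -n/2, and fix unit vectors η, ζ ∈ ℝⁿ. For r ∈ [0,1), the derivative in r of (1-r²)^(1+2λ)/|rη - ζ|^(n+2λ) is at least -((n+2λ-(n-2λ-2)r)(1-r²)^(2λ))/|rη-ζ|^(n+2λ). -/

import Mathlib

/-!
Put `w = r • x - y`. Logarithmic differentiation of `(1 - s ^ 2) ^ p / ‖s • x - y‖ ^ q` at `s = r`
produces the term `-q * ⟪w, x⟫ / ‖w‖ ^ 2`, and everything rests on the estimate
`(1 + r) * ⟪w, x⟫ ≤ ‖w‖ ^ 2`. This holds because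
`‖w‖ ^ 2 - (1 + r) * ⟪w, x⟫ = ‖y‖ ^ 2 + (1 - r) * ⟪x, y⟫ - r * ‖x‖ ^ 2`, which by Cauchy–Schwarz is
at least `(‖y‖ - ‖x‖) * (‖y‖ + r * ‖x‖)`, nonnegative as soon as `‖x‖ ≤ ‖y‖` and `|r| ≤ 1`.
-/

section

variable {E : Type*} [NormedAddCommGroup E] [InnerProductSpace ℝ E]

theorem hasDerivAt_norm_comp_rpow {f : ℝ → E} {f' : E} {t : ℝ} (hf : HasDerivAt f f' t)
    (hft : f t ≠ 0) (q : ℝ) :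
    HasDerivAt (fun s ↦ ‖f s‖ ^ q) (q * ‖f t‖ ^ (q - 2) * inner ℝ (f t) f') t := by
  have sq_rpow (v : E) (a : ℝ) : (‖v‖ ^ 2) ^ a = ‖v‖ ^ (2 * a) := by
    rw [Real.rpow_mul (norm_nonneg v), Real.rpow_two]
  have h := hf.norm_sq.rpow_const (p := q / 2) (Or.inl (pow_ne_zero 2 (norm_ne_zero_iff.2 hft)))
  simp only [sq_rpow] at h
  convert h using 1 <;> ring_nf

theorem hasDerivAt_one_sub_sq_rpow {r : ℝ} (hr : r ^ 2 ≠ 1) (p : ℝ) :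
    HasDerivAt (fun s : ℝ ↦ (1 - s ^ 2) ^ p) (-(2 * p * r * (1 - r ^ 2) ^ (p - 1))) r := by
  have h := ((hasDerivAt_pow 2 r).const_sub 1).rpow_const (p := p)
    (Or.inl (sub_ne_zero.2 hr.symm))
  refine h.congr_deriv ?_
  push_cast
  ring

theorem hasDerivAt_one_sub_sq_rpow_div_norm_smul_sub_rpow {x y : E} {r : ℝ} (hr : r ^ 2 ≠ 1)
    (hxy : r • x ≠ y) (p q : ℝ) :
    HasDerivAt (fun s : ℝ ↦ (1 - s ^ 2) ^ p / ‖s • x - y‖ ^ q)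
      (-((2 * p * r + q * ((1 - r ^ 2) * inner ℝ (r • x - y) x / ‖r • x - y‖ ^ 2)) *
        (1 - r ^ 2) ^ (p - 1)) / ‖r • x - y‖ ^ q) r := by
  have hw : r • x - y ≠ 0 := sub_ne_zero.2 hxy
  have hw_pos : 0 < ‖r • x - y‖ := norm_pos_iff.2 hw
  have hu : 1 - r ^ 2 ≠ 0 := sub_ne_zero.2 hr.symm
  have hline : HasDerivAt (fun s : ℝ ↦ s • x - y) x r := by
    simpa using ((hasDerivAt_id r).smul_const x).sub_const y
  refine ((hasDerivAt_one_sub_sq_rpow hr p).div (hasDerivAt_norm_comp_rpow hline hw q)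
    (Real.rpow_pos_of_pos hw_pos q).ne').congr_deriv ?_
  rw [Real.rpow_sub hw_pos, Real.rpow_two, Real.rpow_sub_one hu]
  field_simp
  ring

theorem smul_ne_of_norm_le_of_abs_lt_one {x y : E} {r : ℝ} (hy : y ≠ 0) (hxy : ‖x‖ ≤ ‖y‖)
    (hr : |r| < 1) : r • x ≠ y := by
  rintro rfl
  have hx : 0 < ‖x‖ := norm_pos_iff.2 (right_ne_zero_of_smul hy)
  rw [norm_smul, Real.norm_eq_abs] at hxy
  exact hxy.not_gt (mul_lt_of_lt_one_left hx hr)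

theorem one_add_mul_inner_smul_sub_le_norm_sq {x y : E} {r : ℝ} (hxy : ‖x‖ ≤ ‖y‖)
    (hr : |r| ≤ 1) : (1 + r) * inner ℝ (r • x - y) x ≤ ‖r • x - y‖ ^ 2 := by
  obtain ⟨hr_lower, hr_upper⟩ := abs_le.1 hr
  have cauchy_schwarz : -(‖x‖ * ‖y‖) ≤ inner ℝ x y :=
    neg_le_of_abs_le (abs_real_inner_le_norm x y)
  have hsum : 0 ≤ ‖y‖ + r * ‖x‖ := by nlinarith [norm_nonneg x]
  refine sub_nonneg.1 ?_
  calc 0 ≤ (‖y‖ - ‖x‖) * (‖y‖ + r * ‖x‖) := mul_nonneg (sub_nonneg.2 hxy) hsum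
    _ = ‖y‖ ^ 2 + (1 - r) * -(‖x‖ * ‖y‖) - r * ‖x‖ ^ 2 := by ring
    _ ≤ ‖y‖ ^ 2 + (1 - r) * inner ℝ x y - r * ‖x‖ ^ 2 := by gcongr
    _ = ‖r • x - y‖ ^ 2 - (1 + r) * inner ℝ (r • x - y) x := by
      rw [norm_sub_sq_real, norm_smul, mul_pow, Real.norm_eq_abs, sq_abs, inner_sub_left,
        real_inner_smul_left, real_inner_smul_left, real_inner_self_eq_norm_sq,
        real_inner_comm x y]
      ring

theorem one_sub_sq_mul_inner_div_norm_sq_le {x y : E} {r : ℝ} (hxy : ‖x‖ ≤ ‖y‖) (hr : |r| ≤ 1) :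
    (1 - r ^ 2) * inner ℝ (r • x - y) x / ‖r • x - y‖ ^ 2 ≤ 1 - r := by
  have hr_upper : 0 ≤ 1 - r := sub_nonneg.2 (le_of_abs_le hr)
  refine div_le_of_le_mul₀ (sq_nonneg _) hr_upper ?_
  calc (1 - r ^ 2) * inner ℝ (r • x - y) x = (1 - r) * ((1 + r) * inner ℝ (r • x - y) x) := by ring
    _ ≤ (1 - r) * ‖r • x - y‖ ^ 2 :=
      mul_le_mul_of_nonneg_left (one_add_mul_inner_smul_sub_le_norm_sq hxy hr) hr_upper

theorem stmt5_general {n l : ℝ} (hl : -(n / 2) ≤ l) {η ζ : E} (hζ : ζ ≠ 0) (hηζ : ‖η‖ ≤ ‖ζ‖)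
    {r : ℝ} (hr : |r| < 1) {d : ℝ}
    (hd : HasDerivAt (fun s : ℝ ↦ (1 - s ^ 2) ^ (1 + 2 * l) / ‖s • η - ζ‖ ^ (n + 2 * l)) d r) :
    -((n + 2 * l - (n - 2 * l - 2) * r) * (1 - r ^ 2) ^ (2 * l)) / ‖r • η - ζ‖ ^ (n + 2 * l)
      ≤ d := by
  have hr_sq : r ^ 2 < 1 := (sq_lt_one_iff_abs_lt_one r).2 hr
  have hu : 0 ≤ 1 - r ^ 2 := sub_nonneg.2 hr_sq.le
  have hq : 0 ≤ n + 2 * l := by linarith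
  rw [hd.unique (hasDerivAt_one_sub_sq_rpow_div_norm_smul_sub_rpow hr_sq.ne
    (smul_ne_of_norm_le_of_abs_lt_one hζ hηζ hr) _ _), add_sub_cancel_left]
  refine div_le_div_of_nonneg_right (neg_le_neg (mul_le_mul_of_nonneg_right ?_
    (Real.rpow_nonneg hu _))) (Real.rpow_nonneg (norm_nonneg _) _)
  calc 2 * (1 + 2 * l) * r
        + (n + 2 * l) * ((1 - r ^ 2) * inner ℝ (r • η - ζ) η / ‖r • η - ζ‖ ^ 2)
    _ ≤ 2 * (1 + 2 * l) * r + (n + 2 * l) * (1 - r) := by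
        gcongr
        exact one_sub_sq_mul_inner_div_norm_sq_le hηζ hr.le
    _ = n + 2 * l - (n - 2 * l - 2) * r := by ring

end

theorem stmt5 (n : ℕ) (hn : 2 ≤ n) (l : ℝ) (hl : -(n / 2 : ℝ) < l)
    (η ζ : EuclideanSpace ℝ (Fin n)) (hη : ‖η‖ = 1) (hζ : ‖ζ‖ = 1)
    (r : ℝ) (hr : r ∈ Set.Ico (0:ℝ) 1) (d : ℝ)
    (hd : HasDerivAt (fun s : ℝ => (1 - s ^ 2) ^ (1 + 2 * l) / ‖s • η - ζ‖ ^ ((n : ℝ) + 2 * l)) d r) :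
    -((n + 2 * l - (n - 2 * l - 2) * r) * (1 - r ^ 2) ^ (2 * l)) / ‖r • η - ζ‖ ^ ((n : ℝ) + 2 * l) ≤ d :=
  stmt5_general hl.le (ne_zero_of_norm_ne_zero (hζ.trans_ne one_ne_zero)) (hη.trans hζ.symm).le
    ((abs_of_nonneg hr.1).trans_lt hr.2) hd
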